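/- arXiv:1812.11370 — 2 statements merged into one kernel-verified Lean document; each statement's English description precedes it below -/
import Mathlib

section
/- Let a ∈ ℤ, let α > 0 with n-1 < α < n for some positive integer n, let β > 0, let m be a natural number with m < β, and let λ be a real number with |λ| < 1. Then for every k ∈ ℕ_{a+1}, the m-th backward difference of the discrete Mittag–Leffler function satisfies ∇^m F_{α,β}(λ,k,a) = F_{α,β-m}(λ,k,a). -/
/-- The rising function `p^{q̄} = Γ(p+q)/Γ(p)`. -/
noncomputable def rise (p : ℤ) (q : ℝ) : ℝ :=
  Real.Gamma ((p : ℝ) + q) / Real.Gamma (p : ℝ)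

/-- The discrete Mittag–Leffler function
`F_{α,β}(λ,k,a) = ∑_{j=0}^∞ λ^j (k-a)^{\overline{jα+β-1}}/Γ(jα+β)` for `k ≥ a+1`,
with the convention that it vanishes for `k ≤ a`. -/
noncomputable def discML (α β lam : ℝ) (k a : ℤ) : ℝ :=
  if a + 1 ≤ k then
    ∑' j : ℕ, lam ^ j * rise (k - a) ((j : ℝ) * α + β - 1) / Real.Gamma ((j : ℝ) * α + β)
  else 0

/-- The `n`-th backward difference `∇ⁿ f(k) = ∑_{j=0}^n (-1)^j C(n,j) f(k-j)`. -/
noncomputable def bdiff (n : ℕ) (f : ℤ → ℝ) (k : ℤ) : ℝ :=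
  ∑ j ∈ Finset.range (n + 1), (-1 : ℝ) ^ j * (n.choose j : ℝ) * f (k - j)

/-!
With `H_μ(p) = Γ(p + μ) / (Γ(p) Γ(μ + 1))` for `p ≥ 1`, the `j`-th term of `F_{α,β}(λ,k,a)` is
`λ^j H_{jα+β-1}(k - a)`. Since `H_μ(p)` is the generalized binomial coefficient
`(μ + 1)(μ + 2) ⋯ (μ + p - 1) / (p - 1)!`, Pascal's rule says `∇ H_μ = H_{μ-1}`, also at `p = 1`
provided `H_μ` is extended by `0` to `p ≤ 0`, as the convention for `F` does. The `m`-th difference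
thus lowers every index `jα+β-1` by `m`; it may be taken termwise because `H_μ(p)` is polynomial in
`μ` and `∑ λ^j q(j)` converges for every polynomial `q`.
-/

open Polynomial

lemma multichoose_eq_ascPochhammer_eval_div {K : Type*} [Field K] [CharZero K] [BinomialRing K]
    (x : K) (r : ℕ) :
    Ring.multichoose x r = (ascPochhammer K r).eval x / r.factorial := by
  rw [eq_div_iff (Nat.cast_ne_zero.mpr r.factorial_ne_zero), mul_comm, ← nsmul_eq_mul,
    Ring.factorial_nsmul_multichoose_eq_ascPochhammer, ascPochhammer_smeval_eq_eval]

lemma real_Gamma_add_nat_div_Gamma_eq {x : ℝ} (hx : ∀ i : ℕ, x ≠ -i) (r : ℕ) :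
    Real.Gamma (x + r) / Real.Gamma x = (ascPochhammer ℝ r).eval x := by
  have h := Complex.Gamma_add_nat_div_Gamma_eq (n := r) (x : ℂ) fun i => mod_cast hx i
  rw [← ascPochhammer_map Complex.ofRealHom, ← Complex.ofRealHom_eq_coe, eval_map_apply] at h
  apply Complex.ofReal_injective
  simpa only [Complex.ofRealHom_eq_coe, Complex.ofReal_div, ← Complex.Gamma_ofReal,
    Complex.ofReal_add, Complex.ofReal_natCast] using h

lemma summable_polynomial_eval_mul_geometric {R : Type*} [NormedRing R] [CompleteSpace R]
    (q : R[X]) {r : R} (hr : ‖r‖ < 1) : Summable fun j : ℕ => q.eval (j : R) * r ^ j := by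
  simp_rw [eval_eq_sum_range, Finset.sum_mul, mul_assoc]
  exact summable_sum fun i _ => (summable_pow_mul_geometric_of_norm_lt_one i hr).mul_left _

section BackwardDifference

open scoped fwdDiff

lemma bdiff_eq_fwdDiff_iter (m : ℕ) (f : ℤ → ℝ) (k : ℤ) :
    bdiff m f k = (-1) ^ m * (Δ_[-1])^[m] f k := by
  rw [bdiff, fwdDiff_iter_eq_sum_shift, Finset.mul_sum]
  refine Finset.sum_congr rfl fun j hj => ?_
  have hsign : (-1 : ℝ) ^ j = (-1) ^ m * (-1) ^ (m - j) := by
    obtain ⟨d, rfl⟩ := Nat.exists_eq_add_of_le (Finset.mem_range_succ_iff.mp hj)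
    rw [Nat.add_sub_cancel_left, pow_add, mul_assoc, ← mul_pow]
    simp
  have hshift : k + j • (-1 : ℤ) = k - j := by simp [sub_eq_add_neg]
  rw [hshift, hsign, zsmul_eq_mul]
  push_cast
  ring

lemma bdiff_zero (f : ℤ → ℝ) (k : ℤ) : bdiff 0 f k = f k := by
  simp [bdiff]

lemma bdiff_succ (m : ℕ) (f : ℤ → ℝ) (k : ℤ) :
    bdiff (m + 1) f k = bdiff m f k - bdiff m f (k - 1) := by
  simp only [bdiff_eq_fwdDiff_iter, Function.iterate_succ_apply', fwdDiff, ← sub_eq_add_neg]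
  ring

lemma bdiff_const_mul (m : ℕ) (c : ℝ) (f : ℤ → ℝ) (k : ℤ) :
    bdiff m (fun i => c * f i) k = c * bdiff m f k := by
  simp only [bdiff, Finset.mul_sum, mul_left_comm]

lemma bdiff_tsum {ι : Type*} {f : ι → ℤ → ℝ} (hf : ∀ i, Summable fun j => f j i)
    (m : ℕ) (k : ℤ) :
    bdiff m (fun i => ∑' j, f j i) k = ∑' j, bdiff m (f j) k := by
  simp only [bdiff, ← tsum_mul_left]
  rw [Summable.tsum_finsetSum fun (i : ℕ) _ => (hf (k - i)).mul_left _]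

end BackwardDifference

section TaylorMonomial

/-- The nabla Taylor monomial `H_μ(p) = p^{\overline{μ}} / Γ(μ + 1)` based at `0`, extended by `0`
to `p ≤ 0`. It is encoded by its binomial form, a polynomial in `μ`, which extends the Gamma
quotient continuously to its poles. -/
noncomputable def taylorMonomial {R : Type*} [AddCommMonoidWithOne R] [Pow R ℕ] [BinomialRing R]
    (μ : R) (p : ℤ) : R :=
  if 0 < p then Ring.multichoose (μ + 1) (p - 1).toNat else 0

section BinomialRing

variable {R : Type*} [NonAssocRing R] [Pow R ℕ] [BinomialRing R]

lemma taylorMonomial_of_nonpos (μ : R) {p : ℤ} (hp : p ≤ 0) : taylorMonomial μ p = 0 :=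
  if_neg hp.not_gt

lemma taylorMonomial_natCast_add_one (μ : R) (r : ℕ) :
    taylorMonomial μ (r + 1) = Ring.multichoose (μ + 1) r := by
  rw [taylorMonomial, if_pos (by lia), add_sub_cancel_right, Int.toNat_natCast]

lemma taylorMonomial_sub [NatPowAssoc R] (μ : R) (p : ℤ) :
    taylorMonomial μ p - taylorMonomial μ (p - 1) = taylorMonomial (μ - 1) p := by
  obtain hp | hp := le_or_gt p 0
  · simp only [taylorMonomial_of_nonpos _ hp, taylorMonomial_of_nonpos μ (by lia : p - 1 ≤ 0),
      sub_zero]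
  · obtain ⟨r, rfl⟩ : ∃ r : ℕ, p = r + 1 := ⟨(p - 1).toNat, by lia⟩
    rw [add_sub_cancel_right, taylorMonomial_natCast_add_one, taylorMonomial_natCast_add_one,
      sub_add_cancel]
    cases r with
    | zero =>
      rw [Nat.cast_zero, taylorMonomial_of_nonpos _ le_rfl, sub_zero, Ring.multichoose_zero_right,
        Ring.multichoose_zero_right]
    | succ r =>
      rw [Nat.cast_succ, taylorMonomial_natCast_add_one, Ring.multichoose_succ_succ,
        add_sub_cancel_right]

end BinomialRing

lemma bdiff_taylorMonomial (m : ℕ) (μ : ℝ) (a k : ℤ) :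
    bdiff m (fun i => taylorMonomial μ (i - a)) k = taylorMonomial (μ - m) (k - a) := by
  induction m generalizing k with
  | zero => rw [bdiff_zero, Nat.cast_zero, sub_zero]
  | succ m ih =>
    rw [bdiff_succ, ih, ih, sub_right_comm k 1 a, taylorMonomial_sub, Nat.cast_succ, sub_sub]

lemma rise_div_Gamma_eq_taylorMonomial {μ : ℝ} (hμ : ∀ i : ℕ, μ + 1 ≠ -i) {p : ℤ} (hp : 0 < p) :
    rise p μ / Real.Gamma (μ + 1) = taylorMonomial μ p := by
  obtain ⟨r, rfl⟩ : ∃ r : ℕ, p = r + 1 := ⟨(p - 1).toNat, by lia⟩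
  rw [taylorMonomial_natCast_add_one, multichoose_eq_ascPochhammer_eval_div,
    ← real_Gamma_add_nat_div_Gamma_eq hμ, ← Real.Gamma_nat_eq_factorial, rise, div_right_comm]
  push_cast
  rw [add_assoc, add_comm 1 μ, add_comm (r : ℝ)]

end TaylorMonomial

section Series

lemma summable_pow_mul_taylorMonomial {lam : ℝ} (hlam : |lam| < 1) (α β : ℝ) (p : ℤ) :
    Summable fun j : ℕ => lam ^ j * taylorMonomial ((j : ℝ) * α + β) p := by
  obtain hp | hp := le_or_gt p 0
  · simpa only [taylorMonomial_of_nonpos _ hp, mul_zero] using summable_zero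
  · obtain ⟨r, rfl⟩ : ∃ r : ℕ, p = r + 1 := ⟨(p - 1).toNat, by lia⟩
    let q : ℝ[X] := (ascPochhammer ℝ r).comp (X * C α + C β + 1)
    have hq (j : ℕ) : lam ^ j * taylorMonomial ((j : ℝ) * α + β) (r + 1) =
        q.eval (j : ℝ) * lam ^ j / r.factorial := by
      rw [taylorMonomial_natCast_add_one, multichoose_eq_ascPochhammer_eval_div]
      simp only [q, eval_comp, eval_add, eval_mul, eval_X, eval_C, eval_one]
      ring
    simp_rw [hq]
    exact (summable_polynomial_eval_mul_geometric q hlam).div_const _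

lemma discML_eq_tsum_taylorMonomial {α β : ℝ} (hpole : ∀ j i : ℕ, (j : ℝ) * α + β ≠ -i)
    (lam : ℝ) (k a : ℤ) :
    discML α β lam k a =
      ∑' j : ℕ, lam ^ j * taylorMonomial ((j : ℝ) * α + (β - 1)) (k - a) := by
  unfold discML
  split_ifs with hk
  · refine tsum_congr fun j => ?_
    have hμ : (j : ℝ) * α + (β - 1) + 1 = j * α + β := by ring
    rw [mul_div_assoc, add_sub_assoc, ← rise_div_Gamma_eq_taylorMonomial (hμ ▸ hpole j) (by lia),
      hμ]
  · simp only [taylorMonomial_of_nonpos _ (by lia : k - a ≤ 0), mul_zero, tsum_zero]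

end Series

theorem bdiff_discML_general {α β lam : ℝ} (hlam : |lam| < 1) (m : ℕ)
    (hpole : ∀ j i : ℕ, (j : ℝ) * α + (β - m) ≠ -i) (a k : ℤ) :
    bdiff m (fun i => discML α β lam i a) k = discML α (β - m) lam k a := by
  have hpole' (j i : ℕ) : (j : ℝ) * α + β ≠ -i := fun h =>
    hpole j (i + m) (by push_cast; linarith)
  simp_rw [discML_eq_tsum_taylorMonomial hpole', discML_eq_tsum_taylorMonomial hpole]
  rw [bdiff_tsum fun i => summable_pow_mul_taylorMonomial hlam α (β - 1) (i - a)]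
  refine tsum_congr fun j => ?_
  rw [bdiff_const_mul, bdiff_taylorMonomial, add_sub_assoc, sub_right_comm]

/-- for `n-1 < α < n`, `β > 0`, `m ∈ ℕ` with `m < β` and `|λ| < 1`,
the `m`-th backward difference of the discrete Mittag–Leffler function satisfies
`∇^m F_{α,β}(λ,k,a) = F_{α,β-m}(λ,k,a)` for every `k ∈ ℕ_{a+1}`. -/
theorem bdiff_discML (a : ℤ) (n : ℕ) (hn : 0 < n) (α : ℝ)
    (hα1 : (n : ℝ) - 1 < α) (hα2 : α < n) (β : ℝ) (hβ : 0 < β)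
    (m : ℕ) (hm : (m : ℝ) < β) (lam : ℝ) (hlam : |lam| < 1)
    (k : ℤ) (hk : a + 1 ≤ k) :
    bdiff m (fun j => discML α β lam j a) k = discML α (β - m) lam k a := by
  have hα : 0 < α := by
    have : (1 : ℝ) ≤ n := mod_cast hn
    linarith
  refine bdiff_discML_general hlam m (fun j i => ne_of_gt ?_) a k
  calc (-i : ℝ) ≤ 0 := by simp
    _ < j * α + (β - m) := add_pos_of_nonneg_of_pos (by positivity) (sub_pos.mpr hm)
end

section
/- Let a ∈ ℤ, α > 0, λ ∈ ℝ, and let y₀, u : ℕ_{a+1} → ℝ. Define a sequence of functions y_p : ℕ_{a+1} → ℝ, starting from y₀, by the recursion y_p(k) = y₀(k) + λ·ₐ∇ₖ^{-α} y_{p-1}(k) + ₐ∇ₖ^{-α} u(k) for p ≥ 1. Then for every p ≥ 1 and every k ∈ ℕ_{a+1} one has y_p(k) = ∑_{j=0}^{p} λ^j · ₐ∇ₖ^{-jα} y₀(k) + ∑_{j=0}^{p-1} λ^j · ₐ∇ₖ^{-(j+1)α} u(k), where ₐ∇ₖ^{-0} denotes the identity operator. -/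
/-- The `γ`-th nabla fractional sum
`ₐ∇ₖ^{-γ} f(k) = ∑_{j=0}^{k-a-1} (Γ(j+γ)/(Γ(γ)Γ(j+1))) f(k-j)` for `γ > 0`,
with the convention that the `0`-th fractional sum is the identity. -/
noncomputable def nsum (a : ℤ) (γ : ℝ) (f : ℤ → ℝ) (k : ℤ) : ℝ :=
  if γ = 0 then f k
  else ∑ j ∈ Finset.range (k - a).toNat,
    (Real.Gamma ((j : ℝ) + γ) / (Real.Gamma γ * Real.Gamma ((j : ℝ) + 1))) * f (k - j)

/-!
Encode `f : ℕ_{a+1} → ℝ` by its generating series `F = ∑ f(a+1+n) Xⁿ`. The Gamma quotients in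
`ₐ∇ₖ^{-γ}` are the coefficients of `(1 - X)^{-γ}`, so a fractional sum of order `γ` is
multiplication by `(1 - X)^{-γ}` on generating series. The recursion thus reads
`Y_{p+1} = Y₀ + λ (1 - X)^{-α} Y_p + (1 - X)^{-α} U` in `ℝ⟦X⟧`, and its closed form is a finite
geometric sum in which `((1 - X)^{-α})^j = (1 - X)^{-jα}`.
-/

open PowerSeries Finset

section Recurrence

variable {R M : Type*} [Semiring R] [AddCommMonoid M] [Module R M]

lemma eq_sum_pow_smul_of_affine_recurrence {q : R} {x v : M} {z : ℕ → M} (h_zero : z 0 = x)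
    (h_succ : ∀ p, z (p + 1) = x + q • z p + v) (p : ℕ) :
    z p = (∑ j ∈ range (p + 1), q ^ j • x) + ∑ j ∈ range p, q ^ j • v := by
  induction p with
  | zero => simp [h_zero]
  | succ p ih =>
    rw [h_succ, ih, sum_range_succ' (q ^ · • x) (p + 1), sum_range_succ' (q ^ · • v) p]
    simp only [smul_add, smul_sum, smul_smul, ← pow_succ', pow_zero, one_smul]
    abel

end Recurrence

section NegBinomialSeries

variable {R : Type*} [CommRing R] [BinomialRing R]

/-- The power series of `(1 - X) ^ (-r)`, obtained from that of `(1 + X) ^ (-r)` by `X ↦ -X`. -/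
noncomputable def negBinomialSeries (r : R) : R⟦X⟧ :=
  rescale (-1) (binomialSeries R (-r))

lemma coeff_negBinomialSeries (r : R) (n : ℕ) :
    coeff n (negBinomialSeries r) = Ring.multichoose r n := by
  rw [negBinomialSeries, coeff_rescale, binomialSeries_coeff, Ring.choose_neg', Units.smul_def,
    zsmul_eq_mul, Int.cast_negOnePow_natCast, smul_eq_mul, mul_one, ← mul_assoc, ← mul_pow,
    neg_one_mul, neg_neg, one_pow, one_mul]

lemma negBinomialSeries_zero : negBinomialSeries (0 : R) = 1 := by
  rw [negBinomialSeries, neg_zero, binomialSeries_zero, map_one]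

lemma negBinomialSeries_add (r s : R) :
    negBinomialSeries (r + s) = negBinomialSeries r * negBinomialSeries s := by
  simp only [negBinomialSeries, neg_add, binomialSeries_add, map_mul]

lemma negBinomialSeries_natCast_mul (n : ℕ) (r : R) :
    negBinomialSeries (n * r) = negBinomialSeries r ^ n := by
  induction n with
  | zero => rw [Nat.cast_zero, zero_mul, negBinomialSeries_zero, pow_zero]
  | succ n ih => rw [Nat.cast_succ, add_one_mul, negBinomialSeries_add, ih, pow_succ]

end NegBinomialSeries

lemma Gamma_add_natCast_div_Gamma {s : ℝ} (hs : ∀ m : ℕ, s ≠ -m) (n : ℕ) :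
    Real.Gamma (s + n) / Real.Gamma s = (ascPochhammer ℝ n).eval s := by
  have h_complex := Complex.Gamma_add_nat_div_Gamma_eq (n := n) (s : ℂ) (mod_cast hs)
  rw [← ascPochhammer_map Complex.ofRealHom, ← Complex.ofRealHom_eq_coe,
    Polynomial.eval_map_apply, Complex.ofRealHom_eq_coe, Complex.ofRealHom_eq_coe,
    ← Complex.ofReal_natCast, ← Complex.ofReal_add, Complex.Gamma_ofReal,
    Complex.Gamma_ofReal] at h_complex
  exact_mod_cast h_complex

lemma Gamma_natCast_add_div_eq_multichoose {s : ℝ} (hs : ∀ m : ℕ, s ≠ -m) (n : ℕ) :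
    Real.Gamma (n + s) / (Real.Gamma s * Real.Gamma (n + 1)) = Ring.multichoose s n := by
  have h_factorial : (n.factorial : ℝ) ≠ 0 := Nat.cast_ne_zero.mpr n.factorial_ne_zero
  rw [← div_div, add_comm, Gamma_add_natCast_div_Gamma hs, Real.Gamma_nat_eq_factorial,
    div_eq_iff h_factorial, mul_comm, ← nsmul_eq_mul,
    Ring.factorial_nsmul_multichoose_eq_ascPochhammer, Polynomial.ascPochhammer_smeval_eq_eval]

/-- The generating series of the restriction of `f` to `ℕ_{a+1}`, indexed so that the constant
coefficient is `f (a + 1)`. -/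
noncomputable def genSeries {R : Type*} (a : ℤ) (f : ℤ → R) : R⟦X⟧ :=
  PowerSeries.mk fun n => f (a + 1 + n)

lemma coeff_genSeries {R : Type*} [Semiring R] (a : ℤ) (f : ℤ → R) (n : ℕ) :
    coeff n (genSeries a f) = f (a + 1 + n) :=
  coeff_mk n _

lemma coeff_mul_genSeries {R : Type*} [Semiring R] (a : ℤ) (φ : R⟦X⟧) (f : ℤ → R) (n : ℕ) :
    coeff n (φ * genSeries a f) = ∑ j ∈ range (n + 1), coeff j φ * f (a + 1 + n - j) := by
  rw [coeff_mul, Nat.sum_antidiagonal_eq_sum_range_succ_mk]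
  refine sum_congr rfl fun j hj => ?_
  rw [coeff_genSeries, Nat.cast_sub (mem_range_succ_iff.mp hj), add_sub_assoc]

lemma nsum_eq_coeff {γ : ℝ} (hγ : ∀ m : ℕ, γ ≠ -(m + 1)) (a : ℤ) (f : ℤ → ℝ) (n : ℕ) :
    nsum a γ f (a + 1 + n) = coeff n (negBinomialSeries γ * genSeries a f) := by
  rcases eq_or_ne γ 0 with rfl | h_ne
  · rw [nsum, if_pos rfl, negBinomialSeries_zero, one_mul, coeff_genSeries]
  have h_pole : ∀ m : ℕ, γ ≠ -m
    | 0 => by simpa using h_ne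
    | m + 1 => by simpa using hγ m
  have h_toNat : (a + 1 + n - a).toNat = n + 1 := by lia
  simp only [nsum, if_neg h_ne, h_toNat, coeff_mul_genSeries, coeff_negBinomialSeries,
    Gamma_natCast_add_div_eq_multichoose h_pole]

lemma genSeries_nsum {γ : ℝ} (hγ : ∀ m : ℕ, γ ≠ -(m + 1)) (a : ℤ) (f : ℤ → ℝ) :
    genSeries a (nsum a γ f) = negBinomialSeries γ * genSeries a f := by
  ext n
  rw [coeff_genSeries, nsum_eq_coeff hγ]

/-- The numbers `-(m + 1)` are the poles of `Γ` other than `0`, and `nsum` of order `0` is the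
identity. At negative orders off the poles, `nsum` is the Grünwald–Letnikov fractional
difference. -/
theorem picard_closed_form_general (a : ℤ) (α : ℝ) (hα : ∀ j m : ℕ, (j : ℝ) * α ≠ -(m + 1))
    (lam : ℝ) (y₀ u : ℤ → ℝ) (y : ℕ → ℤ → ℝ) (hy0 : ∀ k : ℤ, a + 1 ≤ k → y 0 k = y₀ k)
    (hrec : ∀ p : ℕ, ∀ k : ℤ, a + 1 ≤ k →
      y (p + 1) k = y₀ k + lam * nsum a α (y p) k + nsum a α u k)
    (p : ℕ) (k : ℤ) (hk : a + 1 ≤ k) :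
    y p k = (∑ j ∈ range (p + 1), lam ^ j * nsum a ((j : ℝ) * α) y₀ k) +
      ∑ j ∈ range p, lam ^ j * nsum a (((j : ℝ) + 1) * α) u k := by
  have h_order : ∀ m : ℕ, α ≠ -(m + 1) := by simpa using hα 1
  have h_zero : genSeries a (y 0) = genSeries a y₀ := by
    ext n
    simpa only [coeff_genSeries] using hy0 (a + 1 + n) (by lia)
  have h_succ (p : ℕ) : genSeries a (y (p + 1)) = genSeries a y₀ +
      (lam • negBinomialSeries α) • genSeries a (y p) + negBinomialSeries α * genSeries a u := by
    ext n
    simpa [smul_mul_assoc, ← genSeries_nsum h_order, coeff_genSeries] using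
      hrec p (a + 1 + n) (by lia)
  have h_nsum (j : ℕ) (f : ℤ → ℝ) (n : ℕ) : nsum a (j * α) f (a + 1 + n) =
      coeff n (negBinomialSeries α ^ j * genSeries a f) := by
    rw [nsum_eq_coeff (hα j), negBinomialSeries_natCast_mul]
  obtain ⟨n, rfl⟩ := Int.le.dest hk
  have h_closed := congrArg (coeff n)
    (eq_sum_pow_smul_of_affine_recurrence (z := fun p => genSeries a (y p)) h_zero h_succ p)
  simpa only [coeff_genSeries, map_add, map_sum, smul_eq_mul, smul_pow, smul_mul_assoc,
    coeff_smul, ← mul_assoc, ← pow_succ, ← h_nsum, Nat.cast_succ] using h_closed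

/-- closed form of the Picard-type iteration
`y_p(k) = y₀(k) + λ·ₐ∇ₖ^{-α} y_{p-1}(k) + ₐ∇ₖ^{-α} u(k)`: for every `p ≥ 1` and
`k ∈ ℕ_{a+1}`,
`y_p(k) = ∑_{j=0}^{p} λ^j ₐ∇ₖ^{-jα} y₀(k) + ∑_{j=0}^{p-1} λ^j ₐ∇ₖ^{-(j+1)α} u(k)`. -/
theorem picard_closed_form (a : ℤ) (α : ℝ) (hα : 0 < α) (lam : ℝ)
    (y₀ u : ℤ → ℝ) (y : ℕ → ℤ → ℝ) (hy0 : y 0 = y₀)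
    (hrec : ∀ p : ℕ, 1 ≤ p → ∀ k : ℤ, a + 1 ≤ k →
      y p k = y₀ k + lam * nsum a α (y (p - 1)) k + nsum a α u k) :
    ∀ p : ℕ, 1 ≤ p → ∀ k : ℤ, a + 1 ≤ k →
      y p k = (∑ j ∈ Finset.range (p + 1), lam ^ j * nsum a ((j : ℝ) * α) y₀ k) +
        ∑ j ∈ Finset.range p, lam ^ j * nsum a (((j : ℝ) + 1) * α) u k := by
  have h_pole (j m : ℕ) : (j : ℝ) * α ≠ -(m + 1) :=
    ((neg_neg_of_pos m.cast_add_one_pos).trans_le (by positivity)).ne'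
  exact fun p _ => picard_closed_form_general a α h_pole lam y₀ u y (fun k _ => congrFun hy0 k)
    (fun p => hrec (p + 1) p.succ_pos) p
end
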